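/- Let L be an r×m integer matrix of full rank r. Then there exists λ* > 0 depending only on L such that for every sufficiently large positive integer p and every j/p ∈ J(L,p) one has λ(j) := p^{m−r} μ_L((j/p + [0,1/p)^m) ∩ ker_T L) ≥ λ*. -/

import Mathlib

open MeasureTheory Set

noncomputable section

/-- The circle group `𝕋 = ℝ/ℤ`. -/
abbrev 𝕋 : Type := AddCircle (1 : ℝ)

/-- The group homomorphism `x ↦ Lx` induced by an integer matrix `L`. -/
def Lhom {r m : ℕ} (L : Matrix (Fin r) (Fin m) ℤ) (G : Type*) [AddCommGroup G] :
    (Fin m → G) →+ (Fin r → G) where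
  toFun x := fun i => ∑ j, L i j • x j
  map_zero' := by ext i; simp
  map_add' x y := by ext i; simp [smul_add, Finset.sum_add_distrib]

/-- `ker_𝕋 L`, the closed subgroup `{x ∈ 𝕋^m : Lx = 0}` of `𝕋^m`. -/
def kerT {r m : ℕ} (L : Matrix (Fin r) (Fin m) ℤ) : AddSubgroup (Fin m → 𝕋) :=
  (Lhom L 𝕋).ker

/-- The point `j/p = (j(1)/p, …, j(m)/p)` of `𝕋^m`. -/
def discPt (m p : ℕ) (j : Fin m → ℤ) : Fin m → 𝕋 :=
  fun i => (((j i : ℝ) / p : ℝ) : 𝕋)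

/-- The discrete torus `Λ(p) = ℤ_p^m / p ≤ 𝕋^m`, as a set. -/
def ΛSet (m p : ℕ) : Set (Fin m → 𝕋) :=
  {y | ∃ j : Fin m → ℤ, y = discPt m p j}

/-- The cube `[0, 1/p)^m ⊆ 𝕋^m`. -/
def cube0 (m p : ℕ) : Set (Fin m → 𝕋) :=
  Set.pi Set.univ fun _ : Fin m => (fun t : ℝ => (t : 𝕋)) '' Set.Ico (0 : ℝ) (1 / p)

/-- `J(L,p)`: the points `j/p ∈ Λ(p)` with `μ_L((j/p + [0,1/p)^m) ∩ ker_𝕋 L) > 0`. -/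
def Jset {r m : ℕ} (L : Matrix (Fin r) (Fin m) ℤ) (p : ℕ) (μL : Measure (kerT L)) :
    Set (Fin m → 𝕋) :=
  {y ∈ ΛSet m p | 0 < μL {x : kerT L | (x : Fin m → 𝕋) - y ∈ cube0 m p}}

/-- The weight `λ(j) = p^{m-r} μ_{L,𝕋}((j/p + [0,1/p)^m) ∩ ker_𝕋 L)`. -/
def lamVal {r m : ℕ} (L : Matrix (Fin r) (Fin m) ℤ) (p : ℕ) (μL : Measure (kerT L))
    (j : Fin m → ℤ) : ℝ :=
  (p : ℝ) ^ (m - r) * (μL {x : kerT L | (x : Fin m → 𝕋) - discPt m p j ∈ cube0 m p}).toReal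

/-!
Write `V` for the real kernel of `L` and let `ψ : V → ker_𝕋 L` be the projection, which is
continuous and open. Averaging the `V`-volume of `{u | x + ψ u ∈ C}` over `x ∈ ker_𝕋 L` shows that a
cell `C` of positive measure has `{u | x + ψ u ∈ C}` of positive volume for some `x`, and that,
conversely, `μ_L C` is at least a constant times the volume of any bounded piece of this set.

The set is a union of translates of slices `p⁻¹ {s ∈ [0, 1)^m : L s = v}` with `v` an integer
vector. Only finitely many integer vectors `v` are values of `L` on `[0, 1)^m`, so the positive ones
among the slice volumes are bounded below; the scaling by `p⁻¹` contributes `p^{-dim V}`.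
-/

section Rank

variable {m n K F : Type*} [Fintype n] [Field K] [Field F]

theorem exists_rank_factorization [Fintype m] (A : Matrix m n K) :
    ∃ (B : Matrix m (Fin A.rank) K) (C : Matrix (Fin A.rank) n K)
      (P : Matrix (Fin A.rank) m K) (Q : Matrix n (Fin A.rank) K),
      B * C = A ∧ P * A * Q = 1 := by
  classical
  let f := A.mulVecLin
  have hf : f.toMatrix' = A := LinearMap.toMatrix'_toLin' A
  let e : LinearMap.range f ≃ₗ[K] (Fin A.rank → K) :=
    LinearEquiv.ofFinrankEq _ _ (Module.finrank_fin_fun K).symm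
  let b : (Fin A.rank → K) →ₗ[K] (m → K) := (LinearMap.range f).subtype ∘ₗ e.symm.toLinearMap
  let c : (n → K) →ₗ[K] (Fin A.rank → K) := e.toLinearMap ∘ₗ f.rangeRestrict
  have hbc : b ∘ₗ c = f := by ext; simp [b, c]
  obtain ⟨p, hp⟩ := b.exists_leftInverse_of_injective <|
    LinearMap.ker_eq_bot.2 (Subtype.val_injective.comp e.symm.injective)
  obtain ⟨q, hq⟩ := c.exists_rightInverse_of_surjective <|
    LinearMap.range_eq_top.2 (e.surjective.comp f.surjective_rangeRestrict)
  have hpq : p ∘ₗ f ∘ₗ q = LinearMap.id := by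
    rw [← hbc, LinearMap.comp_assoc, hq, LinearMap.comp_id, hp]
  refine ⟨b.toMatrix', c.toMatrix', p.toMatrix', q.toMatrix', ?_, ?_⟩
  · rw [← LinearMap.toMatrix'_comp, hbc, hf]
  · rw [← LinearMap.toMatrix'_id, ← hpq, LinearMap.toMatrix'_comp, LinearMap.toMatrix'_comp, hf,
      Matrix.mul_assoc]

theorem rank_map_ringHom [Finite m] (f : K →+* F) (A : Matrix m n K) : (A.map f).rank = A.rank := by
  have := Fintype.ofFinite m
  obtain ⟨B, C, P, Q, hBC, hPQ⟩ := exists_rank_factorization A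
  apply le_antisymm
  · calc (A.map f).rank = (B.map f * C.map f).rank := by rw [← Matrix.map_mul, hBC]
      _ ≤ (B.map f).rank := Matrix.rank_mul_le_left _ _
      _ ≤ A.rank := (Matrix.rank_le_card_width _).trans_eq (Fintype.card_fin _)
  · calc A.rank = (P.map f * A.map f * Q.map f).rank := by
          rw [← Matrix.map_mul, ← Matrix.map_mul, hPQ, Matrix.map_one _ f.map_zero f.map_one,
            Matrix.rank_one, Fintype.card_fin]
      _ ≤ (P.map f * A.map f).rank := Matrix.rank_mul_le_left _ _
      _ ≤ (A.map f).rank := Matrix.rank_mul_le_right _ _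

end Rank

section Averaging

variable {E H : Type*} [MeasurableSpace E] [MeasurableSpace H] [AddGroup H] [MeasurableAdd₂ H]
  (μ : Measure H) [SFinite μ] [μ.IsAddRightInvariant] (ν : Measure E) [SFinite ν]
  {ψ : E → H} {N : Set H}

theorem lintegral_measure_preimage_add_right (hψ : Measurable ψ) (hN : MeasurableSet N) :
    ∫⁻ x, ν {u | x + ψ u ∈ N} ∂μ = μ N * ν univ := by
  have hS : MeasurableSet {q : H × E | q.1 + ψ q.2 ∈ N} :=
    (measurable_fst.add (hψ.comp measurable_snd)) hN
  calc ∫⁻ x, ν {u | x + ψ u ∈ N} ∂μ = (μ.prod ν) {q | q.1 + ψ q.2 ∈ N} :=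
        (Measure.prod_apply hS).symm
    _ = ∫⁻ u, μ ((· + ψ u) ⁻¹' N) ∂ν := Measure.prod_apply_symm hS
    _ = μ N * ν univ := by simp only [measure_preimage_add_right, lintegral_const]

theorem exists_measure_preimage_add_right_ne_zero (hψ : Measurable ψ) (hN : MeasurableSet N)
    (hν : ν ≠ 0) (hμN : μ N ≠ 0) : ∃ x, ν {u | x + ψ u ∈ N} ≠ 0 := by
  by_contra! h
  have := lintegral_measure_preimage_add_right μ ν hψ hN
  simp [h, hμN, hν] at this

end Averaging

section OpenHom

variable {E H : Type*} [NormedAddCommGroup E] [MeasurableSpace E] [BorelSpace E]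
  [AddCommGroup H] [TopologicalSpace H] [IsTopologicalAddGroup H] [SecondCountableTopology H]
  [MeasurableSpace H] [BorelSpace H]
  (μ : Measure H) [SFinite μ] [μ.IsAddLeftInvariant]
  (ν : Measure E) [SFinite ν] [ν.IsAddLeftInvariant]

theorem measure_image_ball_mul_measure_le {ψ : E →+ H} (hψ : Measurable ψ) (hopen : IsOpenMap ψ)
    {D : ℝ} {A : Set E} (hA : ∀ u ∈ A, ∀ v ∈ A, dist u v ≤ D) {N : Set H} (hN : MeasurableSet N)
    {x : H} (hAN : ∀ u ∈ A, x + ψ u ∈ N) :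
    μ (ψ '' Metric.ball 0 1) * ν A ≤ μ N * ν (Metric.closedBall 0 (D + 1)) := by
  obtain rfl | ⟨u₀, hu₀⟩ := A.eq_empty_or_nonempty
  · simp
  set B : Set E := Metric.closedBall 0 (D + 1)
  set W : Set H := (-(x + ψ u₀) + ·) ⁻¹' (ψ '' Metric.ball 0 1)
  have hW : MeasurableSet W :=
    ((hopen _ Metric.isOpen_ball).preimage (continuous_const_add _)).measurableSet
  have hle : ∀ z ∈ W, ν A ≤ ν.restrict B {u | z + ψ u ∈ N} := by
    rintro z ⟨w, hw, hz⟩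
    have hsub : ((u₀ + w) + ·) ⁻¹' A ⊆ {u | z + ψ u ∈ N} ∩ B := by
      intro u hu
      refine ⟨?_, ?_⟩
      · have := hAN _ hu
        rwa [map_add, map_add, hz, ← add_assoc, ← add_assoc, add_neg_cancel_left] at this
      · have hd : dist (u₀ + w + u) u₀ ≤ D := hA _ hu _ hu₀
        rw [dist_eq_norm, add_assoc, add_sub_cancel_left] at hd
        have := norm_sub_le (w + u) w
        rw [add_sub_cancel_left] at this
        rw [mem_closedBall_zero_iff]
        linarith [mem_ball_zero_iff.1 hw]
    calc ν A = ν (((u₀ + w) + ·) ⁻¹' A) := (measure_preimage_add ν _ _).symm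
      _ ≤ ν ({u | z + ψ u ∈ N} ∩ B) := measure_mono hsub
      _ ≤ ν.restrict B {u | z + ψ u ∈ N} := Measure.le_restrict_apply _ _
  calc μ (ψ '' Metric.ball 0 1) * ν A = ∫⁻ _ in W, ν A ∂μ := by
        rw [setLIntegral_const, measure_preimage_add, mul_comm]
    _ ≤ ∫⁻ z in W, ν.restrict B {u | z + ψ u ∈ N} ∂μ := setLIntegral_mono' hW hle
    _ ≤ ∫⁻ z, ν.restrict B {u | z + ψ u ∈ N} ∂μ := setLIntegral_le_lintegral _ _
    _ = μ N * ν B := by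
        rw [lintegral_measure_preimage_add_right μ _ hψ hN, Measure.restrict_apply_univ]

variable [ProperSpace E] [μ.IsOpenPosMeasure] [IsFiniteMeasureOnCompacts ν]

theorem exists_pos_mul_measure_le {ψ : E →+ H} (hψ : Measurable ψ) (hopen : IsOpenMap ψ) (D : ℝ) :
    ∃ c : ENNReal, 0 < c ∧ ∀ (A : Set E) (N : Set H) (x : H), (∀ u ∈ A, ∀ v ∈ A, dist u v ≤ D) →
      MeasurableSet N → (∀ u ∈ A, x + ψ u ∈ N) → c * ν A ≤ μ N := by
  have hfin : ν (Metric.closedBall 0 (D + 1)) ≠ ⊤ := (isCompact_closedBall _ _).measure_ne_top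
  have hpos : μ (ψ '' Metric.ball 0 1) ≠ 0 :=
    ((hopen _ Metric.isOpen_ball).measure_pos μ
      ((Metric.nonempty_ball.2 one_pos).image ψ)).ne'
  refine ⟨_, ENNReal.div_pos hpos hfin, fun A N x hA hN hAN => ?_⟩
  rw [← ENNReal.mul_div_right_comm]
  exact ENNReal.div_le_of_le_mul (measure_image_ball_mul_measure_le μ ν hψ hopen hA hN hAN)

end OpenHom

section Torus

variable {ι : Type*}

/-- The inclusion of the integer lattice `ℤ^ι` into `ℝ^ι`. -/
def latticeIncl (ι : Type*) : (ι → ℤ) →+ (ι → ℝ) :=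
  (Int.castAddHom ℝ).compLeft ι

/-- The quotient map `ℝ^ι → 𝕋^ι`. -/
def torusMk (ι : Type*) : (ι → ℝ) →+ (ι → 𝕋) :=
  (QuotientAddGroup.mk' (AddSubgroup.zmultiples (1 : ℝ))).compLeft ι

/-- The half-open unit cube `[0, 1)^ι` in `ℝ^ι`. -/
def unitCube (ι : Type*) : Set (ι → ℝ) :=
  univ.pi fun _ => Ico 0 1

theorem latticeIncl_eq_zero_of_abs_lt_one {n : ι → ℤ} (h : ∀ i, |latticeIncl ι n i| < 1) :
    latticeIncl ι n = 0 := by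
  have hn (i : ι) : |(n i : ℝ)| < 1 := h i
  have hn0 : n = 0 := funext fun i => Int.abs_lt_one_iff.1 (by exact_mod_cast hn i)
  rw [hn0, map_zero]

theorem torusMk_eq_zero_iff {y : ι → ℝ} : torusMk ι y = 0 ↔ y ∈ (latticeIncl ι).range := by
  have h (i : ι) : (y i : 𝕋) = 0 ↔ ∃ n : ℤ, (n : ℝ) = y i := by
    rw [AddCircle.coe_eq_zero_iff]
    simp
  calc torusMk ι y = 0 ↔ ∀ i, ∃ n : ℤ, (n : ℝ) = y i := funext_iff.trans (forall_congr' h)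
    _ ↔ y ∈ (latticeIncl ι).range := by
      simp only [Classical.skolem, AddMonoidHom.mem_range, funext_iff]; rfl

theorem torusMk_eq_iff {y z : ι → ℝ} :
    torusMk ι y = torusMk ι z ↔ ∃ n, y - latticeIncl ι n = z := by
  rw [← sub_eq_zero, ← map_sub, torusMk_eq_zero_iff, AddMonoidHom.mem_range]
  exact exists_congr fun n => by rw [eq_sub_iff_add_eq', sub_eq_iff_eq_add, eq_comm]

theorem isOpenQuotientMap_torusMk (ι : Type*) : IsOpenQuotientMap (torusMk ι) :=
  .piMap fun _ => QuotientAddGroup.isOpenQuotientMap_mk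

theorem dist_le_one_of_mem_unitCube [Fintype ι] {y z : ι → ℝ} (hy : y ∈ unitCube ι)
    (hz : z ∈ unitCube ι) : dist y z ≤ 1 :=
  (dist_pi_le_iff zero_le_one).2 fun i =>
    (Real.dist_le_of_mem_Icc_01 (Ico_subset_Icc_self (hy i trivial))
      (Ico_subset_Icc_self (hz i trivial)))

theorem cube0_eq_image (m p : ℕ) :
    cube0 m p = torusMk (Fin m) '' univ.pi fun _ => Ico (0 : ℝ) (1 / p) :=
  (piMap_image_univ_pi (fun _ (t : ℝ) => (t : 𝕋)) _).symm

theorem measurableSet_cube0 (m : ℕ) {p : ℕ} (hp : 0 < p) : MeasurableSet (cube0 m p) := by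
  refine .univ_pi fun _ => ?_
  have hp' : (0 : ℝ) < 1 / p := by positivity
  rw [← Ioo_insert_left hp', image_insert_eq]
  exact (QuotientAddGroup.isOpenMap_coe _ isOpen_Ioo).measurableSet.insert _

theorem torusMk_sub_discPt_mem_cube0_iff {m p : ℕ} (hp : 0 < p) {j : Fin m → ℤ} {y : Fin m → ℝ} :
    torusMk (Fin m) y - discPt m p j ∈ cube0 m p ↔
      ∃ n, p • (y - latticeIncl _ n) - latticeIncl _ j ∈ unitCube (Fin m) := by
  have hp' : (0 : ℝ) < p := by exact_mod_cast hp
  have hdisc : discPt m p j = torusMk (Fin m) ((p : ℝ)⁻¹ • latticeIncl _ j) := by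
    ext i; simp only [discPt, div_eq_inv_mul]; rfl
  have hcoord (a b c : ℝ) :
      a - (p : ℝ)⁻¹ * b - c ∈ Ico (0 : ℝ) (1 / p) ↔ p * (a - c) - b ∈ Ico (0 : ℝ) 1 := by
    have h : p * (a - (p : ℝ)⁻¹ * b - c) = p * (a - c) - b := by field_simp; ring
    rw [← h, mem_Ico, mem_Ico, lt_div_iff₀' hp', mul_nonneg_iff_of_pos_left hp']
  rw [hdisc, ← map_sub, cube0_eq_image]
  calc torusMk (Fin m) (y - (p : ℝ)⁻¹ • latticeIncl _ j) ∈
        torusMk (Fin m) '' (univ.pi fun _ => Ico (0 : ℝ) (1 / p))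
      ↔ ∃ n, y - (p : ℝ)⁻¹ • latticeIncl _ j - latticeIncl _ n ∈
          (univ.pi fun _ => Ico (0 : ℝ) (1 / p)) := by
        constructor
        · rintro ⟨s, hs, h⟩
          obtain ⟨n, rfl⟩ := torusMk_eq_iff.1 h.symm
          exact ⟨n, hs⟩
        · rintro ⟨n, hn⟩
          exact ⟨_, hn, (torusMk_eq_iff.2 ⟨n, rfl⟩).symm⟩
    _ ↔ ∃ n, p • (y - latticeIncl _ n) - latticeIncl _ j ∈ unitCube (Fin m) :=
        exists_congr fun n => forall₂_congr fun i _ => by simpa using hcoord _ _ _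

end Torus

section Kernel

variable {r m : ℕ} (L : Matrix (Fin r) (Fin m) ℤ)

theorem Lhom_compLeft {G G' : Type*} [AddCommGroup G] [AddCommGroup G'] (f : G →+ G')
    (x : Fin m → G) : Lhom L G' (f.compLeft _ x) = f.compLeft _ (Lhom L G x) := by
  ext i
  simp [Lhom]

theorem Lhom_latticeIncl_mem_range (n : Fin m → ℤ) :
    Lhom L ℝ (latticeIncl _ n) ∈ (latticeIncl (Fin r)).range :=
  ⟨Lhom L ℤ n, (Lhom_compLeft L (Int.castAddHom ℝ) n).symm⟩

/-- The real subspace `ker_ℝ L = {x ∈ ℝ^m : Lx = 0}`. -/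
def realKer : Submodule ℝ (Fin m → ℝ) :=
  LinearMap.ker (L.map (Int.cast : ℤ → ℝ)).mulVecLin

theorem mem_realKer_iff {y : Fin m → ℝ} : y ∈ realKer L ↔ Lhom L ℝ y = 0 := by
  have h : Lhom L ℝ y = (L.map (Int.cast : ℤ → ℝ)).mulVecLin y := by
    ext i
    simp [Lhom, Matrix.mulVec, dotProduct]
  rw [h, realKer, LinearMap.mem_ker]

theorem finrank_realKer :
    Module.finrank ℝ (realKer L) = m - (L.map (Int.cast : ℤ → ℚ)).rank := by
  have hrank : (L.map (Int.cast : ℤ → ℝ)).rank = (L.map (Int.cast : ℤ → ℚ)).rank := by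
    rw [← rank_map_ringHom (Rat.castHom ℝ), Matrix.map_map]
    congr 2
  have h := LinearMap.finrank_range_add_finrank_ker (L.map (Int.cast : ℤ → ℝ)).mulVecLin
  rw [Module.finrank_fin_fun] at h
  rw [← hrank]
  exact Nat.eq_sub_of_add_eq' h

theorem torusMk_mem_kerT_iff {y : Fin m → ℝ} :
    torusMk _ y ∈ kerT L ↔ Lhom L ℝ y ∈ (latticeIncl _).range := by
  have h : Lhom L 𝕋 (torusMk _ y) = torusMk _ (Lhom L ℝ y) := Lhom_compLeft L _ y
  rw [← torusMk_eq_zero_iff, ← h, kerT, AddMonoidHom.mem_ker]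

theorem continuous_Lhom (G : Type*) [AddCommGroup G] [TopologicalSpace G]
    [IsTopologicalAddGroup G] : Continuous (Lhom L G) :=
  continuous_pi fun i => show Continuous fun x : Fin m → G => ∑ k, L i k • x k by fun_prop

instance compactSpace_kerT : CompactSpace (kerT L) :=
  isCompact_iff_compactSpace.1
    (isClosed_singleton.preimage (continuous_Lhom L 𝕋)).isCompact

/-- The homomorphism `ker_ℝ L → ker_𝕋 L` induced by `ℝ^m → 𝕋^m`. -/
def kerMk : realKer L →+ kerT L :=
  ((torusMk (Fin m)).comp (realKer L).subtype.toAddMonoidHom).codRestrict (kerT L) fun u =>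
    (torusMk_mem_kerT_iff L).2 ⟨0, by
      rw [map_zero]; exact ((mem_realKer_iff L).1 u.2).symm⟩

@[simp] theorem coe_kerMk (u : realKer L) : (kerMk L u : Fin m → 𝕋) = torusMk _ u := rfl

theorem continuous_kerMk : Continuous (kerMk L) :=
  ((isOpenQuotientMap_torusMk _).continuous.comp continuous_subtype_val).subtype_mk _

theorem isOpenMap_kerMk : IsOpenMap (kerMk L) := by
  rw [IsTopologicalAddGroup.isOpenMap_iff_nhds_zero]
  intro s hs
  obtain ⟨t, ht, hts⟩ := mem_nhds_subtype _ _ _ |>.1 (Filter.mem_map.1 hs)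
  have hsmall : {y : Fin m → ℝ | ∀ i, |Lhom L ℝ y i| < 1} ∈ nhds 0 := by
    have hc : Continuous (Lhom L ℝ) := continuous_Lhom L ℝ
    refine Filter.eventually_all.2 fun i => ?_
    have : Continuous fun y => |Lhom L ℝ y i| := ((continuous_apply i).comp hc).abs
    exact this.continuousAt.eventually_lt_const (by simp)
  have himage : torusMk (Fin m) '' (t ∩ {y | ∀ i, |Lhom L ℝ y i| < 1}) ∈ nhds 0 := by
    rw [← map_zero (torusMk (Fin m))]
    exact (isOpenQuotientMap_torusMk _).isOpenMap.image_mem_nhds (Filter.inter_mem ht hsmall)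
  filter_upwards [continuous_subtype_val.continuousAt.preimage_mem_nhds himage]
  rintro ⟨_, hx⟩ ⟨y, ⟨hyt, hy⟩, rfl⟩
  obtain ⟨n, hn⟩ := (torusMk_mem_kerT_iff L).1 hx
  have hker : y ∈ realKer L := by
    rw [mem_realKer_iff, ← hn]
    exact latticeIncl_eq_zero_of_abs_lt_one fun i => hn ▸ hy i
  exact hts (show (⟨y, hker⟩ : realKer L) ∈ _ from hyt)

end Kernel

section Slices

variable {r m : ℕ} (L : Matrix (Fin r) (Fin m) ℤ)

/-- The polytope `{t' ∈ [0, 1)^m : L t' = L t}`, translated by `-t` so that it lies in `ker_ℝ L`. -/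
def cubeSlice (t : Fin m → ℝ) : Set (realKer L) :=
  {u | t + (u : Fin m → ℝ) ∈ unitCube (Fin m)}

variable (ν : Measure (realKer L)) [ν.IsAddLeftInvariant]

theorem measure_cubeSlice_congr {t t' : Fin m → ℝ} (h : Lhom L ℝ t = Lhom L ℝ t') :
    ν (cubeSlice L t) = ν (cubeSlice L t') := by
  have hker : t - t' ∈ realKer L := by rw [mem_realKer_iff, map_sub, h, sub_self]
  have htrans : cubeSlice L t = (⟨t - t', hker⟩ + ·) ⁻¹' cubeSlice L t' := by
    ext u
    change t + u ∈ unitCube (Fin m) ↔ t' + (t - t' + u) ∈ unitCube (Fin m)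
    rw [← add_assoc, add_sub_cancel]
  rw [htrans, measure_preimage_add]

theorem finite_Lhom_unitCube_inter_lattice :
    (Lhom L ℝ '' unitCube (Fin m) ∩ (latticeIncl (Fin r)).range).Finite := by
  refine ((finite_Icc (fun i => -∑ k, |L i k|) fun i => ∑ k, |L i k|).image
    (latticeIncl (Fin r))).subset ?_
  rintro _ ⟨⟨t, ht, hn⟩, n, rfl⟩
  have hbound (i : Fin r) : |n i| ≤ ∑ k, |L i k| := by
    have : |(n i : ℝ)| ≤ ∑ k, |(L i k : ℝ)| := calc
      |(n i : ℝ)| = |∑ k, L i k • t k| := congrArg abs (congrFun hn i).symm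
      _ ≤ ∑ k, |L i k • t k| := Finset.abs_sum_le_sum_abs _ _
      _ ≤ ∑ k, |(L i k : ℝ)| := Finset.sum_le_sum fun k _ => by
        rw [zsmul_eq_mul, abs_mul, abs_of_nonneg (ht k trivial).1]
        exact mul_le_of_le_one_right (abs_nonneg _) (ht k trivial).2.le
    exact_mod_cast this
  exact ⟨n, ⟨fun i => (abs_le.1 (hbound i)).1, fun i => (abs_le.1 (hbound i)).2⟩, rfl⟩

theorem exists_pos_le_measure_cubeSlice :
    ∃ ε : ENNReal, 0 < ε ∧ ∀ t, Lhom L ℝ t ∈ (latticeIncl _).range →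
      ν (cubeSlice L t) ≠ 0 → ε ≤ ν (cubeSlice L t) := by
  let sliceMeasure (v : Fin r → ℝ) : ENNReal := ν (cubeSlice L (Function.invFun (Lhom L ℝ) v))
  have hslice (t : Fin m → ℝ) : sliceMeasure (Lhom L ℝ t) = ν (cubeSlice L t) :=
    measure_cubeSlice_congr L ν (Function.invFun_eq ⟨t, rfl⟩)
  let values := ((finite_Lhom_unitCube_inter_lattice L).image sliceMeasure).toFinset.erase 0
  refine ⟨values.inf id, (Finset.lt_inf_iff ENNReal.zero_lt_top).2 fun a ha =>
    pos_iff_ne_zero.2 (Finset.ne_of_mem_erase ha), fun t ht hne => ?_⟩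
  obtain ⟨u, hu⟩ := nonempty_of_measure_ne_zero hne
  have hLu : Lhom L ℝ (t + (u : Fin m → ℝ)) = Lhom L ℝ t := by
    rw [map_add, (mem_realKer_iff L).1 u.2, add_zero]
  exact Finset.inf_le (f := id) <| Finset.mem_erase.2 ⟨hne, (Finite.mem_toFinset _).2
    ⟨_, ⟨⟨t + u, hu, hLu⟩, ht⟩, hslice t⟩⟩

end Slices

section Cells

variable {r m : ℕ} (L : Matrix (Fin r) (Fin m) ℤ)

/-- The cell `(j/p + [0, 1/p)^m) ∩ ker_𝕋 L`. -/
def cell (p : ℕ) (j : Fin m → ℤ) : Set (kerT L) :=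
  {x | (x : Fin m → 𝕋) - discPt m p j ∈ cube0 m p}

variable {p : ℕ} {j : Fin m → ℤ}

theorem measurableSet_cell (hp : 0 < p) : MeasurableSet (cell L p j) :=
  (measurable_subtype_coe.sub_const _) (measurableSet_cube0 m hp)

theorem exists_preimage_cell_eq_iUnion (hp : 0 < p) (x : kerT L) :
    ∃ t : (Fin m → ℤ) → Fin m → ℝ, (∀ n, Lhom L ℝ (t n) ∈ (latticeIncl _).range) ∧
      {u | x + kerMk L u ∈ cell L p j} = ⋃ n, ((p : ℝ) • ·) ⁻¹' cubeSlice L (t n) := by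
  obtain ⟨y, hy⟩ := (isOpenQuotientMap_torusMk (Fin m)).surjective x
  have hLy : Lhom L ℝ y ∈ (latticeIncl _).range :=
    (torusMk_mem_kerT_iff L).1 (hy ▸ x.2)
  refine ⟨fun n => p • (y - latticeIncl _ n) - latticeIncl _ j, fun n => ?_, ?_⟩
  · rw [map_sub, map_nsmul, map_sub]
    exact sub_mem (nsmul_mem (sub_mem hLy (Lhom_latticeIncl_mem_range L n)) p)
      (Lhom_latticeIncl_mem_range L j)
  · ext u
    have hxu : ((x + kerMk L u : kerT L) : Fin m → 𝕋) = torusMk _ (y + (u : Fin m → ℝ)) := by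
      rw [AddSubgroup.coe_add, coe_kerMk, map_add, hy]
    rw [mem_ofPred_eq, cell, mem_ofPred_eq, hxu, torusMk_sub_discPt_mem_cube0_iff hp, mem_iUnion]
    refine exists_congr fun n => ?_
    rw [mem_preimage, cubeSlice, mem_ofPred_eq, Submodule.coe_smul, Nat.cast_smul_eq_nsmul]
    congr! 1
    simp only [nsmul_sub, nsmul_add]
    abel

variable (μ : Measure (kerT L)) [μ.IsAddHaarMeasure] (ν : Measure (realKer L)) [ν.IsAddHaarMeasure]

theorem exists_cubeSlice_of_measure_cell_ne_zero (hp : 0 < p) (hμ : μ (cell L p j) ≠ 0) :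
    ∃ (x : kerT L) (t : Fin m → ℝ), Lhom L ℝ t ∈ (latticeIncl _).range ∧
      ν (cubeSlice L t) ≠ 0 ∧
      ∀ u ∈ ((p : ℝ) • ·) ⁻¹' cubeSlice L t, x + kerMk L u ∈ cell L p j := by
  obtain ⟨x, hx⟩ := exists_measure_preimage_add_right_ne_zero μ ν (continuous_kerMk L).measurable
    (measurableSet_cell L hp) (NeZero.ne ν) hμ
  obtain ⟨t, ht, hunion⟩ := exists_preimage_cell_eq_iUnion (j := j) L hp x
  rw [hunion, Ne, measure_iUnion_null_iff, not_forall] at hx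
  obtain ⟨n, hn⟩ := hx
  refine ⟨x, t n, ht n, fun h => hn ?_, fun u hu => ?_⟩
  · rw [Measure.addHaar_preimage_smul ν (by positivity), h, mul_zero]
  · exact hunion.superset (mem_iUnion.2 ⟨n, hu⟩)

theorem dist_le_one_of_mem_preimage_smul_cubeSlice (hp : 0 < p) {t : Fin m → ℝ} {u v : realKer L}
    (hu : (p : ℝ) • u ∈ cubeSlice L t) (hv : (p : ℝ) • v ∈ cubeSlice L t) : dist u v ≤ 1 := by
  have h : dist ((p : ℝ) • u) ((p : ℝ) • v) ≤ 1 :=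
    (dist_add_left t _ _).symm.trans_le (dist_le_one_of_mem_unitCube hu hv)
  have hp' : (1 : ℝ) ≤ p := by exact_mod_cast hp
  calc dist u v ≤ p * dist u v := le_mul_of_one_le_left dist_nonneg hp'
    _ = dist ((p : ℝ) • u) ((p : ℝ) • v) := by
      rw [Subtype.dist_eq, Subtype.dist_eq, Submodule.coe_smul, Submodule.coe_smul, dist_smul₀,
        Real.norm_natCast]
    _ ≤ 1 := h

theorem exists_pos_le_pow_mul_measure_cell :
    ∃ c : ENNReal, 0 < c ∧ ∀ (p : ℕ) (j : Fin m → ℤ), 0 < p → μ (cell L p j) ≠ 0 →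
      c ≤ p ^ Module.finrank ℝ (realKer L) * μ (cell L p j) := by
  let ν : Measure (realKer L) := Measure.addHaar
  obtain ⟨c, hc, hcell⟩ :=
    exists_pos_mul_measure_le μ ν (continuous_kerMk L).measurable (isOpenMap_kerMk L) 1
  obtain ⟨ε, hε, hslice⟩ := exists_pos_le_measure_cubeSlice L ν
  refine ⟨c * ε, ENNReal.mul_pos hc.ne' hε.ne', fun p j hp hμ => ?_⟩
  obtain ⟨x, t, ht, hνt, hsub⟩ := exists_cubeSlice_of_measure_cell_ne_zero L μ ν hp hμ
  set d := Module.finrank ℝ (realKer L)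
  have hscale : (p : ENNReal) ^ d * ν (((p : ℝ) • ·) ⁻¹' cubeSlice L t) = ν (cubeSlice L t) := by
    rw [Measure.addHaar_preimage_smul ν (by positivity), abs_of_nonneg (by positivity),
      ENNReal.ofReal_inv_of_pos (by positivity), ENNReal.ofReal_pow (by positivity),
      ENNReal.ofReal_natCast, ENNReal.mul_inv_cancel_left]
    · simp [hp.ne']
    · finiteness
  calc c * ε ≤ c * ν (cubeSlice L t) := by gcongr; exact hslice t ht hνt
    _ = p ^ d * (c * ν (((p : ℝ) • ·) ⁻¹' cubeSlice L t)) := by rw [← hscale, mul_left_comm]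
    _ ≤ p ^ d * μ (cell L p j) := by
      gcongr
      exact hcell _ _ x
        (fun u hu v hv => dist_le_one_of_mem_preimage_smul_cubeSlice L hp hu hv)
        (measurableSet_cell L hp) hsub

end Cells

theorem lambda_lower_bound_general {r m : ℕ} (L : Matrix (Fin r) (Fin m) ℤ)
    (μL : Measure (kerT L)) [μL.IsAddHaarMeasure] :
    ∃ lamStar : ℝ, 0 < lamStar ∧ ∀ p : ℕ, 0 < p →
      ∀ j : Fin m → ℤ, discPt m p j ∈ Jset L p μL →
        lamStar ≤ (p : ℝ) ^ (m - (L.map (Int.cast : ℤ → ℚ)).rank) * μL.real (cell L p j) := by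
  obtain ⟨c, hc, hcell⟩ := exists_pos_le_pow_mul_measure_cell L μL
  have hc1 : min c 1 ≠ ⊤ := by simp
  refine ⟨(min c 1).toReal, ENNReal.toReal_pos (by simp [hc.ne']) hc1, fun p hp j hj => ?_⟩
  have h := ENNReal.toReal_mono (by finiteness)
    ((min_le_left c 1).trans (hcell p j hp hj.2.ne'))
  rwa [ENNReal.toReal_mul, ENNReal.toReal_pow, ENNReal.toReal_natCast, finrank_realKer] at h

/-- **Uniform positive lower bound for the weights `λ(j)`.**
Let `L` be an `r × m` integer matrix of full rank `r` and let `μL` be the Haar probability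
measure on `ker_𝕋 L`. There is `λ* > 0` depending only on `L` such that for every
sufficiently large positive integer `p` and every `j/p ∈ J(L,p)` one has `λ(j) ≥ λ*`. -/
theorem lambda_lower_bound {r m : ℕ} (L : Matrix (Fin r) (Fin m) ℤ)
    (hrank : (L.map (Int.cast : ℤ → ℚ)).rank = r)
    (μL : Measure (kerT L)) (hHaar : μL.IsAddHaarMeasure) (hprob : IsProbabilityMeasure μL) :
    ∃ lamStar : ℝ, 0 < lamStar ∧
      ∃ p₀ : ℕ, ∀ p : ℕ, p₀ ≤ p →
        ∀ j : Fin m → ℤ, discPt m p j ∈ Jset L p μL → lamStar ≤ lamVal L p μL j := by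
  obtain ⟨lamStar, hpos, h⟩ := lambda_lower_bound_general L μL
  exact ⟨lamStar, hpos, 1, fun p hp j hj => by
    have := h p hp j hj
    rwa [hrank] at this⟩
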